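/- Let p be a prime with p ≡ 1 (mod 6). Then ∑_{i+j ≤ p-1, i,j ≥ 0} (6i+1)(6j+1)·((1/3)_i⁶(1/3)_j⁶)/((1)_i⁶(1)_j⁶) ≡ ((2/3)_{(p-1)/3}⁶/(1)_{(p-1)/3}⁶)·{p² + 2p⁴·∑_{r=1}^{(p-1)/3}(1/(3r-1)² - 1/(3r)²)} (mod p⁶), as a congruence of rational numbers with denominators coprime to p. -/

import Mathlib

/-- The rising factorial (Pochhammer symbol) `(x)_k = x(x+1)⋯(x+k-1)` over `ℚ`. -/
def rf (x : ℚ) (k : ℕ) : ℚ := ∏ i ∈ Finset.range k, (x + i)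

/-!
Split the sixth power `(1/3)_k⁶/(1)_k⁶` by keeping one factor and moving the other five apart
along the fifth roots of unity: `(1/3 + i)⁵` becomes `∏_ζ (1/3 + i - ζt) = (1/3 + i)⁵ - t⁵`, and
`(1 + i)⁵` becomes `(1 + i)⁵ + t⁵`. Hence the deformation changes the summands only modulo `t⁵`.
At `t = p/3 = N + 1/3` one of the parameters is `1/3 - t = -N` and, since the fifth roots of
unity sum to zero, the series is balanced, so Dougall's `₇F₆` sum evaluates it as `p` times a
product with coefficients in `ℚ(ζ)`. Its square is rational, because pairing the `i`-th factor of
`(2/3)_N` with its mirror image (two numbers with sum `t`) makes the roots of unity disappear.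
The double sum agrees modulo `p⁶` with the square of the truncated series: the remaining pairs
`(i, j)` have `i > N` or `j > N`, and then `(1/3)_i` or `(1/3)_j` contains the factor `p/3`.
Expanding the product to second order in `t` gives the bracket.
-/

open Finset

section Dougall

variable {K : Type*} [Field K] {a b c d e g w : K}

/-- The quotient `(w)_k / (1 + a - w)_k` of a well-poised pair of rising factorials. -/
def wellPoisedRatio (a w : K) (k : ℕ) : K := ∏ i ∈ range k, (w + i) / (1 + a - w + i)

lemma wellPoisedRatio_succ (a w : K) (k : ℕ) :
    wellPoisedRatio a w (k + 1) = wellPoisedRatio a w k * ((w + k) / (1 + a - w + k)) :=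
  prod_range_succ _ _

lemma add_mul_wellPoisedRatio_succ {k : ℕ} (h : 1 + a - w + k ≠ 0) :
    (a - w + (k + 1)) * wellPoisedRatio a w (k + 1) = (w + k) * wellPoisedRatio a w k := by
  rw [wellPoisedRatio_succ, show a - w + (k + 1) = 1 + a - w + k by ring]
  field

lemma one_add_sub_add_natCast_ne_zero (h : ∀ i : ℕ, a - w + i ≠ 0) (i : ℕ) :
    1 + a - w + i ≠ 0 := by
  convert h (i + 1) using 1
  push_cast
  ring

lemma mul_wellPoisedRatio_add_one (h : ∀ i : ℕ, a - w + i ≠ 0) (k : ℕ) :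
    w * (a - w) * wellPoisedRatio a (w + 1) k
      = (w + k) * (a - w + k) * wellPoisedRatio a w k := by
  induction k with
  | zero => simp [wellPoisedRatio]
  | succ k ih =>
    have h₀ := h k
    have h₁ := one_add_sub_add_natCast_ne_zero h k
    rw [wellPoisedRatio_succ, ← mul_assoc, ih, wellPoisedRatio_succ,
      show 1 + a - (w + 1) + k = a - w + k by ring]
    push_cast
    field_simp
    ring

lemma wellPoisedRatio_neg_natCast_eq_zero (a : K) {n k : ℕ} (h : n < k) :
    wellPoisedRatio a (-n) k = 0 :=
  prod_eq_zero (mem_range.mpr h) (by simp)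

/-- The `k`-th summand of the very well-poised series `₇F₆` with unit argument, multiplied by `a`:
the very-well-poised factor is written `a + 2k` in place of `(a + 2k) / a`. -/
def dougallTerm (a b c d e f : K) (k : ℕ) : K :=
  (a + 2 * k) * (wellPoisedRatio a a k * wellPoisedRatio a b k * wellPoisedRatio a c k
    * wellPoisedRatio a d k * wellPoisedRatio a e k * wellPoisedRatio a f k)

lemma dougall_certificate (h : b + c + d + e + g = 2 * a) (k : K) :
    (e - g) * ((a + k) * (b + k) * (c + k) * (d + k) * (e + k) * (g + k)
        - k * (a - b + k) * (a - c + k) * (a - d + k) * (a - e + k) * (a - g + k))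
      = (a + 2 * k) * (g * ((a - b - g) * (a - c - g) * (a - d - g)) * ((e + k) * (a - e + k))
        - e * ((a - b - e) * (a - c - e) * (a - d - e)) * ((g + k) * (a - g + k))) := by
  obtain rfl : b = 2 * a - c - d - e - g := by linear_combination h
  ring

/-- A multiple of the `k`-th Dougall summand whose forward difference is the contiguous relation
between `(e + 1, g)` and `(e, g + 1)` for balanced parameters. -/
def dougallAntidifference (a b c d e g : K) (k : ℕ) : K :=
  k * wellPoisedRatio a a k * ((a - b + k) * wellPoisedRatio a b k)
    * ((a - c + k) * wellPoisedRatio a c k) * ((a - d + k) * wellPoisedRatio a d k)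
    * ((a - e + k) * wellPoisedRatio a e k) * ((a - g + k) * wellPoisedRatio a g k)

variable [CharZero K]

lemma dougallTerm_telescope {k : ℕ} (h : b + c + d + e + g = 2 * a)
    (hb : 1 + a - b + k ≠ 0) (hc : 1 + a - c + k ≠ 0) (hd : 1 + a - d + k ≠ 0)
    (he : ∀ i : ℕ, a - e + i ≠ 0) (hg : ∀ i : ℕ, a - g + i ≠ 0) :
    e * g * ((a - b - g) * (a - c - g) * (a - d - g) * (a - e) * dougallTerm a b c d (e + 1) g k
        - (a - b - e) * (a - c - e) * (a - d - e) * (a - g) * dougallTerm a b c d e (g + 1) k)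
      = (e - g) * (dougallAntidifference a b c d e g (k + 1)
        - dougallAntidifference a b c d e g k) := by
  have hA : (k + 1) * wellPoisedRatio a a (k + 1) = (a + k) * wellPoisedRatio a a k := by
    simpa using add_mul_wellPoisedRatio_succ (a := a) (w := a) (k := k)
      (by simpa [add_comm] using k.cast_add_one_ne_zero)
  have hE := mul_wellPoisedRatio_add_one he k
  have hG := mul_wellPoisedRatio_add_one hg k
  have cert := dougall_certificate h (k : K)
  simp only [dougallTerm, dougallAntidifference]
  push_cast
  rw [hA, add_mul_wellPoisedRatio_succ hb, add_mul_wellPoisedRatio_succ hc,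
    add_mul_wellPoisedRatio_succ hd,
    add_mul_wellPoisedRatio_succ (one_add_sub_add_natCast_ne_zero he k),
    add_mul_wellPoisedRatio_succ (one_add_sub_add_natCast_ne_zero hg k)]
  generalize wellPoisedRatio a a k = A, wellPoisedRatio a b k = B, wellPoisedRatio a c k = C,
    wellPoisedRatio a d k = D, wellPoisedRatio a e k = E, wellPoisedRatio a g k = G at *
  linear_combination (a + 2 * k) * (A * B * C * D)
    * (g * ((a - b - g) * (a - c - g) * (a - d - g)) * G * hE
      - e * ((a - b - e) * (a - c - e) * (a - d - e)) * E * hG) - A * B * C * D * E * G * cert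

lemma sum_dougallTerm_contiguous (n : ℕ) (he : e = 2 * a + n + 1 - b - c - d) (he₀ : e ≠ 0)
    (ha : ∀ i : ℕ, 1 + a + i ≠ 0) (hb : ∀ i : ℕ, 1 + a - b + i ≠ 0)
    (hc : ∀ i : ℕ, 1 + a - c + i ≠ 0) (hd : ∀ i : ℕ, 1 + a - d + i ≠ 0)
    (hae : ∀ i : ℕ, a - e + i ≠ 0) :
    (1 + a - b + n) * (1 + a - c + n) * (1 + a - d + n) * (1 + a - b - c - d + n)
        * ∑ k ∈ range (n + 2), dougallTerm a b c d (e + 1) (-(n + 1 : ℕ)) k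
      = (1 + a + n) * (1 + a - b - c + n) * (1 + a - b - d + n) * (1 + a - c - d + n)
        * ∑ k ∈ range (n + 1), dougallTerm a b c d e (-n) k := by
  obtain ⟨g, hg⟩ : ∃ g : K, g = -(n + 1 : ℕ) := ⟨_, rfl⟩
  have hg₀ : g ≠ 0 := by rw [hg, neg_ne_zero]; exact_mod_cast n.succ_ne_zero
  have hgn : g + 1 = -n := by rw [hg]; push_cast; ring
  have hag (i : ℕ) : a - g + i ≠ 0 := by
    convert ha (n + i) using 1
    push_cast
    linear_combination -hgn
  have hlast : dougallTerm a b c d e (-n) (n + 1) = 0 := by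
    simp [dougallTerm, wellPoisedRatio_neg_natCast_eq_zero]
  have hbdry : dougallAntidifference a b c d e g (n + 2) = 0 := by
    rw [dougallAntidifference, hg, wellPoisedRatio_neg_natCast_eq_zero a (Nat.lt_succ_self _)]
    simp
  have key : (a - b - g) * (a - c - g) * (a - d - g) * (a - e)
        * ∑ k ∈ range (n + 2), dougallTerm a b c d (e + 1) g k
      - (a - b - e) * (a - c - e) * (a - d - e) * (a - g)
        * ∑ k ∈ range (n + 2), dougallTerm a b c d e (g + 1) k = 0 := by
    refine (mul_eq_zero_iff_left (mul_ne_zero he₀ hg₀)).mp ?_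
    rw [mul_sum, mul_sum, ← sum_sub_distrib, mul_sum, sum_congr rfl fun k _ =>
      dougallTerm_telescope (by linear_combination he + hgn) (hb k) (hc k) (hd k) hae hag,
      ← mul_sum, sum_range_sub, hbdry]
    simp [dougallAntidifference]
  rw [hgn, sum_range_succ (dougallTerm a b c d e _) (n + 1), hlast, add_zero,
    show a - g = 1 + a + n by linear_combination -hgn,
    show a - b - g = 1 + a - b + n by linear_combination -hgn,
    show a - c - g = 1 + a - c + n by linear_combination -hgn,
    show a - d - g = 1 + a - d + n by linear_combination -hgn] at key
  rw [← hg]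
  subst he
  linear_combination -key

theorem sum_dougallTerm (n : ℕ) (ha : ∀ i : ℕ, 1 + a + i ≠ 0)
    (hb : ∀ i : ℕ, 1 + a - b + i ≠ 0) (hc : ∀ i : ℕ, 1 + a - c + i ≠ 0)
    (hd : ∀ i : ℕ, 1 + a - d + i ≠ 0) (hs : ∀ i : ℕ, b + c + d - a - n + i ≠ 0)
    (he : ∀ i < n, 1 + 2 * a - b - c - d + (i : K) ≠ 0) :
    ∑ k ∈ range (n + 1), dougallTerm a b c d (1 + 2 * a - b - c - d + n) (-n) k
      = a * ∏ i ∈ range n, (1 + a + i) * (1 + a - b - c + i) * (1 + a - b - d + i)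
          * (1 + a - c - d + i)
        / ((1 + a - b + i) * (1 + a - c + i) * (1 + a - d + i) * (1 + a - b - c - d + i)) := by
  induction n with
  | zero => simp [dougallTerm, wellPoisedRatio]
  | succ n ih =>
    have hs' (i : ℕ) : b + c + d - a - n - 1 + i ≠ 0 := by
      convert hs i using 1
      push_cast
      ring
    have step := sum_dougallTerm_contiguous n (e := 1 + 2 * a - b - c - d + n) (by ring)
      (he n n.lt_succ_self) ha hb hc hd (fun i => by convert hs' i using 1; ring)
    have hne : 1 + a - b - c - d + (n : K) ≠ 0 := by
      rw [← neg_ne_zero]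
      convert hs' 0 using 1
      push_cast
      ring
    rw [ih (fun i => by convert hs' (i + 1) using 1; push_cast; ring)
      (fun i hi => he i (by omega))] at step
    rw [prod_range_succ, ← mul_assoc, mul_div_assoc', eq_div_iff (by simp [*]), mul_comm,
      Nat.cast_succ (R := K) n, ← add_assoc, ← Nat.cast_succ, step]
    ring

end Dougall

section Deformation

variable {K : Type*} [Field K] {ζ t : K} {N : ℕ}

/-- The summand `(6k + 1) (1/3)_k⁶ / (1)_k⁶` with five of the six factors of each kind deformed
along the fifth roots of unity; the original summand is the case `t = 0`. -/
def deformedTerm (t : K) (k : ℕ) : K :=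
  (6 * k + 1) * ∏ i ∈ range k,
    (1 / 3 + i) * ((1 / 3 + i) ^ 5 - t ^ 5) / ((1 + i) * ((1 + i) ^ 5 + t ^ 5))

lemma deformedTerm_zero (k : ℕ) :
    deformedTerm (0 : K) k = (6 * k + 1) * (∏ i ∈ range k, (1 / 3 + i : K) / (1 + i)) ^ 6 := by
  simp only [deformedTerm, ← prod_pow]
  congr! 2 with i _
  rw [div_pow]
  ring

lemma sum_fifthRoots_eq_zero (hζ : IsPrimitiveRoot ζ 5) :
    1 + ζ + ζ ^ 2 + ζ ^ 3 + ζ ^ 4 = 0 := by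
  simpa [sum_range_succ] using hζ.geom_sum_eq_zero (by norm_num)

lemma prod_sub_fifthRoots_mul (hζ : IsPrimitiveRoot ζ 5) (x t : K) :
    (x - t) * (x - ζ * t) * (x - ζ ^ 2 * t) * (x - ζ ^ 3 * t) * (x - ζ ^ 4 * t)
      = x ^ 5 - t ^ 5 := by
  have h := sum_fifthRoots_eq_zero hζ
  grind

lemma prod_add_fifthRoots_mul (hζ : IsPrimitiveRoot ζ 5) (x t : K) :
    (x + t) * (x + ζ * t) * (x + ζ ^ 2 * t) * (x + ζ ^ 3 * t) * (x + ζ ^ 4 * t)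
      = x ^ 5 + t ^ 5 := by
  linear_combination prod_sub_fifthRoots_mul hζ x (-t)

lemma prod_add_mul_add_sq_fifthRoots (hζ : IsPrimitiveRoot ζ 5) (D t : K) :
    (D + t * ((ζ + ζ ^ 2) * t) + ((ζ + ζ ^ 2) * t) ^ 2)
        * (D + t * ((ζ + ζ ^ 3) * t) + ((ζ + ζ ^ 3) * t) ^ 2)
        * (D + t * ((ζ ^ 2 + ζ ^ 3) * t) + ((ζ ^ 2 + ζ ^ 3) * t) ^ 2)
      = (D + t ^ 2) * (D ^ 2 - 3 * t ^ 2 * D + t ^ 4) := by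
  have h := sum_fifthRoots_eq_zero hζ
  grind

lemma natCast_sub_one_sub {i : ℕ} (hi : i ∈ range N) : ((N - 1 - i : ℕ) : K) = N - 1 - i := by
  rw [Nat.sub_sub, Nat.cast_sub (by have := mem_range.mp hi; omega)]
  push_cast
  ring

lemma prod_range_add_sq (x : K) (n : ℕ) :
    (∏ i ∈ range n, (x + i)) ^ 2 = ∏ i ∈ range n, (x + i) * (x + (n - 1 - i)) := by
  rw [sq, prod_mul_distrib, ← prod_range_reflect (fun i : ℕ => x + (i : K))]
  congr 1
  exact prod_congr rfl fun i hi => by rw [natCast_sub_one_sub hi]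

variable [CharZero K]

lemma three_mul_dougallTerm (hζ : IsPrimitiveRoot ζ 5) (t : K) (k : ℕ) :
    3 * dougallTerm (1 / 3) (1 / 3 - ζ * t) (1 / 3 - ζ ^ 2 * t) (1 / 3 - ζ ^ 3 * t)
      (1 / 3 - ζ ^ 4 * t) (1 / 3 - t) k = deformedTerm t k := by
  simp only [dougallTerm, wellPoisedRatio, deformedTerm, ← prod_mul_distrib, div_mul_div_comm]
  rw [← mul_assoc]
  congr 1
  · ring
  · refine prod_congr rfl fun i _ => ?_
    rw [← prod_sub_fifthRoots_mul hζ, ← prod_add_fifthRoots_mul hζ]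
    congr 1 <;> ring

lemma ratCast_add_primitiveRoot_mul_ne_zero {n : ℕ} (hn : 2 < n) (hζ : IsPrimitiveRoot ζ n)
    (x : ℚ) {y : ℚ} (hy : y ≠ 0) : (x : K) + ζ * y ≠ 0 := by
  intro h
  have hζq : ζ = Rat.castHom K (-x / y) := by
    have hy' : (y : K) ≠ 0 := Rat.cast_ne_zero.mpr hy
    simp only [eq_ratCast, Rat.cast_div, Rat.cast_neg]
    rw [eq_div_iff hy']
    linear_combination h
  rw [hζq] at hζ
  have hq := hζ.of_map_of_injective (Rat.castHom K).injective
  exact hn.not_ge (hq.eq_orderOf ▸ LinearOrderedRing.orderOf_le_two)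

lemma prod_four_thirds_div (ht : t = N + 1 / 3) (s : K) :
    1 / 3 * ∏ i ∈ range N, (4 / 3 + i) / (1 / 3 - t - s + i)
      = t * ∏ i ∈ range N, (1 + i - t) / (1 + i + s) := by
  have shift : 1 / 3 * ∏ i ∈ range N, (4 / 3 + i : K) = t * ∏ i ∈ range N, (1 / 3 + i : K) := by
    have h := (prod_range_succ' (fun i : ℕ => (1 / 3 + i : K)) N).symm.trans (prod_range_succ _ N)
    rw [ht, add_comm (N : K), mul_comm (_ + _), ← h, mul_comm, Nat.cast_zero, add_zero]
    congr 1
    refine prod_congr rfl fun i _ => ?_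
    push_cast
    ring
  rw [prod_div_distrib, ← mul_div_assoc, shift, mul_div_assoc, ← prod_div_distrib,
    ← prod_range_reflect]
  congr 1
  refine prod_congr rfl fun i hi => ?_
  rw [natCast_sub_one_sub hi, ht, ← neg_div_neg_eq]
  congr 1 <;> ring

lemma ratCast_add_fifthRoot_mul_ne_zero (hζ : IsPrimitiveRoot ζ 5) (ht : t = N + 1 / 3) {j : ℕ}
    (hj : j.Coprime 5) (x : ℚ) : (x : K) + ζ ^ j * t ≠ 0 := by
  rw [show t = ((N + 1 / 3 : ℚ) : K) by rw [ht]; push_cast; ring]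
  exact ratCast_add_primitiveRoot_mul_ne_zero (by norm_num) (hζ.pow_of_coprime j hj) x
    (by positivity)

lemma one_add_natCast_add_fifthRoot_mul_ne_zero (hζ : IsPrimitiveRoot ζ 5) (ht : t = N + 1 / 3)
    {j : ℕ} (hj : j.Coprime 5) (i : ℕ) : 1 + (i : K) + ζ ^ j * t ≠ 0 := by
  simpa using ratCast_add_fifthRoot_mul_ne_zero hζ ht hj (1 + i)

lemma sum_dougallTerm_fifthRoots (hζ : IsPrimitiveRoot ζ 5) (ht : t = N + 1 / 3) :
    ∑ k ∈ range (N + 1), dougallTerm (1 / 3) (1 / 3 - ζ * t) (1 / 3 - ζ ^ 2 * t)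
        (1 / 3 - ζ ^ 3 * t) (1 / 3 - ζ ^ 4 * t) (1 / 3 - t) k
      = 1 / 3 * ∏ i ∈ range N, (4 / 3 + i) / (1 / 3 - t - ζ ^ 4 * t + i)
        * ((2 / 3 + (ζ + ζ ^ 2) * t + i) * (2 / 3 + (ζ + ζ ^ 3) * t + i)
            * (2 / 3 + (ζ ^ 2 + ζ ^ 3) * t + i)
          / ((1 + i + ζ * t) * (1 + i + ζ ^ 2 * t) * (1 + i + ζ ^ 3 * t))) := by
  have hζ₀ := sum_fifthRoots_eq_zero hζ
  have hne {j : ℕ} (hj : j.Coprime 5) := one_add_natCast_add_fifthRoot_mul_ne_zero hζ ht hj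
  have h := sum_dougallTerm (a := (1 / 3 : K)) (b := 1 / 3 - ζ * t) (c := 1 / 3 - ζ ^ 2 * t)
    (d := 1 / 3 - ζ ^ 3 * t) N
    (fun i => by
      convert Rat.cast_ne_zero (α := K).mpr (by positivity : (1 + 1 / 3 + i : ℚ) ≠ 0) using 1
      push_cast
      rfl)
    (fun i => by convert hne (j := 1) (by norm_num) i using 1; ring)
    (fun i => by convert hne (j := 2) (by norm_num) i using 1; ring)
    (fun i => by convert hne (j := 3) (by norm_num) i using 1; ring)
    (fun i => by
      convert hne (j := 4) (by norm_num) i using 1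
      linear_combination ht - t * hζ₀)
    (fun i _ => by
      rw [← neg_ne_zero]
      convert ratCast_add_fifthRoot_mul_ne_zero hζ ht (j := 4) (by norm_num) (N - i - 1 / 3) using 1
      push_cast
      linear_combination ht - t * hζ₀)
  rw [show 1 + 2 * (1 / 3) - (1 / 3 - ζ * t) - (1 / 3 - ζ ^ 2 * t) - (1 / 3 - ζ ^ 3 * t) + N
      = 1 / 3 - ζ ^ 4 * t by linear_combination t * hζ₀ - ht,
    show -(N : K) = 1 / 3 - t by linear_combination ht] at h
  rw [h]
  congr 1
  refine prod_congr rfl fun i _ => ?_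
  rw [div_mul_div_comm]
  congr 1
  · ring
  · linear_combination
      (1 + i + ζ * t) * (1 + i + ζ ^ 2 * t) * (1 + i + ζ ^ 3 * t) * t * hζ₀

lemma sum_deformedTerm_of_isPrimitiveRoot (hζ : IsPrimitiveRoot ζ 5) (ht : t = N + 1 / 3) :
    ∑ k ∈ range (N + 1), deformedTerm t k
      = 3 * t * ∏ i ∈ range N, ((1 + i) ^ 2 - t ^ 2) / ((1 + i) ^ 5 + t ^ 5)
        * ((2 / 3 + (ζ + ζ ^ 2) * t + i) * (2 / 3 + (ζ + ζ ^ 3) * t + i)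
          * (2 / 3 + (ζ ^ 2 + ζ ^ 3) * t + i)) := by
  have hne {j : ℕ} (hj : j.Coprime 5) := one_add_natCast_add_fifthRoot_mul_ne_zero hζ ht hj
  simp_rw [← three_mul_dougallTerm hζ, ← mul_sum, sum_dougallTerm_fifthRoots hζ ht, mul_assoc 3 t]
  congr 1
  rw [prod_mul_distrib, ← mul_assoc, prod_four_thirds_div ht, mul_assoc, ← prod_mul_distrib]
  congr 1
  refine prod_congr rfl fun i _ => ?_
  have h₀ : 1 + (i : K) + t ≠ 0 := by
    convert Rat.cast_ne_zero (α := K).mpr (by positivity : (1 + i + (N + 1 / 3) : ℚ) ≠ 0) using 1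
    rw [ht]
    push_cast
    rfl
  have h₁ := hne (j := 1) (by norm_num) i
  have h₂ := hne (j := 2) (by norm_num) i
  have h₃ := hne (j := 3) (by norm_num) i
  have h₄ := hne (j := 4) (by norm_num) i
  rw [pow_one] at h₁
  rw [← prod_add_fifthRoots_mul hζ]
  field_simp
  ring

/-- The product of the factor `2/3 + i` of `(2/3)_N` and its mirror image `2/3 + (N - 1 - i)`,
written in terms of `t = N + 1/3`, the sum of the two. -/
def mirrorPair (t : K) (i : ℕ) : K := (2 / 3 + i) * (t - (2 / 3 + i))

lemma sq_prod_two_thirds_add (ht : t = N + 1 / 3) (s : K) :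
    (∏ i ∈ range N, (2 / 3 + s + i)) ^ 2
      = ∏ i ∈ range N, (mirrorPair t i + t * s + s ^ 2) := by
  rw [prod_range_add_sq]
  exact prod_congr rfl fun i _ => by rw [ht, mirrorPair]; ring

/-- The `i`-th factor of the square of the deformed sum, where `z = 1 + i` and `D` is the `i`-th
`mirrorPair`. -/
def deformationFactor (t z D : K) : K :=
  ((z ^ 2 - t ^ 2) / (z ^ 5 + t ^ 5)) ^ 2 * ((D + t ^ 2) * (D ^ 2 - 3 * t ^ 2 * D + t ^ 4))

lemma sq_sum_deformedTerm_of_isPrimitiveRoot (hζ : IsPrimitiveRoot ζ 5) (ht : t = N + 1 / 3) :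
    (∑ k ∈ range (N + 1), deformedTerm t k) ^ 2
      = (3 * t) ^ 2 * ∏ i ∈ range N, deformationFactor t (1 + i) (mirrorPair t i) := by
  simp only [sum_deformedTerm_of_isPrimitiveRoot hζ ht, mul_pow (3 * t), prod_mul_distrib, mul_pow,
    sq_prod_two_thirds_add ht, ← prod_pow, deformationFactor]
  simp only [mul_assoc, ← prod_mul_distrib]
  congr! 4 with i _
  linear_combination prod_add_mul_add_sq_fifthRoots hζ (mirrorPair t i) t

theorem sq_sum_deformedTerm (ht : t = N + 1 / 3) :
    (∑ k ∈ range (N + 1), deformedTerm t k) ^ 2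
      = (3 * t) ^ 2 * ∏ i ∈ range N, deformationFactor t (1 + i) (mirrorPair t i) := by
  obtain ⟨ζ, hζ⟩ := HasEnoughRootsOfUnity.exists_primitiveRoot (AlgebraicClosure K) 5
  apply (algebraMap K (AlgebraicClosure K)).injective
  have h := sq_sum_deformedTerm_of_isPrimitiveRoot hζ (N := N) (t := algebraMap K _ t)
    (by simp [ht, map_ofNat (algebraMap K (AlgebraicClosure K))])
  simpa [deformedTerm, mirrorPair, deformationFactor,
    map_ofNat (algebraMap K (AlgebraicClosure K))] using h

end Deformation

section Congruence

variable {K ι : Type*} [NormedField K] {ρ : ℝ} {s : Finset ι} {f g : ι → K}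
  {t x y z u v x' y' D : K}

/-- `x` and `y` are integral and congruent up to an error of norm at most `ρ`. -/
def IntCongr (ρ : ℝ) (x y : K) : Prop := ‖x‖ ≤ 1 ∧ ‖y‖ ≤ 1 ∧ ‖x - y‖ ≤ ρ

lemma norm_mul_le_of_le_one (hx : ‖x‖ ≤ 1) (hy : ‖y‖ ≤ ρ) : ‖x * y‖ ≤ ρ := by
  rw [norm_mul]
  exact (mul_le_of_le_one_left (norm_nonneg y) hx).trans hy

lemma norm_prod_le_one (h : ∀ i ∈ s, ‖f i‖ ≤ 1) : ‖∏ i ∈ s, f i‖ ≤ 1 := by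
  rw [norm_prod]
  exact prod_le_one (fun _ _ => norm_nonneg _) h

lemma norm_prod_le_of_mem {i : ι} (hi : i ∈ s) (hfi : ‖f i‖ ≤ ρ) (h : ∀ j ∈ s, ‖f j‖ ≤ 1) :
    ‖∏ j ∈ s, f j‖ ≤ ρ := by
  classical
  rw [← prod_erase_mul s f hi]
  exact norm_mul_le_of_le_one (norm_prod_le_one fun j hj => h j (mem_of_mem_erase hj)) hfi

lemma IntCongr.refl (hρ : 0 ≤ ρ) (hx : ‖x‖ ≤ 1) : IntCongr ρ x x :=
  ⟨hx, hx, by simpa using hρ⟩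

lemma IntCongr.symm (h : IntCongr ρ x y) : IntCongr ρ y x :=
  ⟨h.2.1, h.1, by simpa only [norm_sub_rev] using h.2.2⟩

variable [IsUltrametricDist K]

lemma norm_add_le_of_le_of_le (hx : ‖x‖ ≤ ρ) (hy : ‖y‖ ≤ ρ) : ‖x + y‖ ≤ ρ :=
  (IsUltrametricDist.norm_add_le_max x y).trans (max_le hx hy)

lemma norm_two_le_one : ‖(2 : K)‖ ≤ 1 := by
  simpa using IsUltrametricDist.norm_natCast_le_one K 2

lemma norm_add_eq_one (hx : ‖x‖ = 1) (hy : ‖y‖ < 1) : ‖x + y‖ = 1 := by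
  rw [IsUltrametricDist.norm_add_eq_max_of_norm_ne_norm (by rw [hx]; exact hy.ne'), hx,
    max_eq_left hy.le]

namespace IntCongr

lemma of_norm_le (hρ : ρ ≤ 1) (hy : ‖y‖ ≤ 1) (h : ‖x - y‖ ≤ ρ) : IntCongr ρ x y :=
  ⟨by simpa using norm_add_le_of_le_of_le (h.trans hρ) hy, hy, h⟩

lemma trans (h : IntCongr ρ x y) (h' : IntCongr ρ y z) : IntCongr ρ x z :=
  ⟨h.1, h'.2.1, by simpa using norm_add_le_of_le_of_le h.2.2 h'.2.2⟩

lemma mul (h : IntCongr ρ x y) (h' : IntCongr ρ x' y') : IntCongr ρ (x * x') (y * y') :=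
  ⟨norm_mul_le_of_le_one h.1 h'.1, norm_mul_le_of_le_one h.2.1 h'.2.1, by
    rw [show x * x' - y * y' = x * (x' - y') + y' * (x - y) by ring]
    exact norm_add_le_of_le_of_le (norm_mul_le_of_le_one h.1 h'.2.2)
      (norm_mul_le_of_le_one h'.2.1 h.2.2)⟩

lemma prod (hρ : 0 ≤ ρ) (h : ∀ i ∈ s, IntCongr ρ (f i) (g i)) :
    IntCongr ρ (∏ i ∈ s, f i) (∏ i ∈ s, g i) := by
  classical
  induction s using Finset.induction_on with
  | empty => simpa using refl (K := K) hρ (x := 1) (by simp)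
  | insert a s ha ih =>
    simp only [forall_mem_insert] at h
    rw [prod_insert ha, prod_insert ha]
    exact h.1.mul (ih h.2)

lemma div (hρ : ρ < 1) (h : IntCongr ρ x y) (h' : IntCongr ρ x' y') (hy' : ‖y'‖ = 1) :
    IntCongr ρ (x / x') (y / y') := by
  have hx' : ‖x'‖ = 1 := by simpa using norm_add_eq_one hy' (h'.2.2.trans_lt hρ)
  have hx'₀ : x' ≠ 0 := norm_ne_zero_iff.mp (by simp [hx'])
  have hy'₀ : y' ≠ 0 := norm_ne_zero_iff.mp (by simp [hy'])
  have hinv : IntCongr ρ x'⁻¹ y'⁻¹ := by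
    refine ⟨by simp [hx'], by simp [hy'], ?_⟩
    rw [inv_sub_inv hx'₀ hy'₀, norm_div, norm_mul, hx', hy', norm_sub_rev]
    simpa using h'.2.2
  simpa only [div_eq_mul_inv] using h.mul hinv

lemma mul_one_add (hρ : 0 ≤ ρ) (hρ₁ : ρ ≤ 1) (hx : IntCongr (ρ ^ 2) x (1 + u))
    (hy : IntCongr (ρ ^ 2) y (1 + v)) (hu : ‖u‖ ≤ ρ) (hv : ‖v‖ ≤ ρ) :
    IntCongr (ρ ^ 2) (x * y) (1 + (u + v)) := by
  have huv : ‖u + v‖ ≤ 1 := norm_add_le_of_le_of_le (hu.trans hρ₁) (hv.trans hρ₁)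
  refine (hx.mul hy).trans
    (of_norm_le (pow_le_one₀ hρ hρ₁) (norm_add_le_of_le_of_le (by simp) huv) ?_)
  rw [show (1 + u) * (1 + v) - (1 + (u + v)) = u * v by ring, norm_mul, sq]
  exact mul_le_mul hu hv (norm_nonneg _) hρ

lemma prod_one_add (hρ : 0 ≤ ρ) (hρ₁ : ρ ≤ 1) (h : ∀ i ∈ s, ‖f i‖ ≤ ρ) :
    IntCongr (ρ ^ 2) (∏ i ∈ s, (1 + f i)) (1 + ∑ i ∈ s, f i) := by
  classical
  induction s using Finset.induction_on with
  | empty => simpa using refl (pow_nonneg hρ 2) (by simp)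
  | insert a s ha ih =>
    simp only [forall_mem_insert] at h
    rw [prod_insert ha, sum_insert ha]
    exact mul_one_add hρ hρ₁
      (refl (pow_nonneg hρ 2) (norm_add_le_of_le_of_le (by simp) (h.1.trans hρ₁))) (ih h.2) h.1
      (IsUltrametricDist.norm_sum_le_of_forall_le_of_nonneg hρ h.2)

end IntCongr

lemma IntCongr.norm_sq_sub_le (hz : ‖z‖ ≤ 1) (huv : IntCongr ((‖z‖ ^ 2) ^ 2) u v)
    (hy : y ^ 2 = z ^ 2 * u) (hxy : ‖x - y‖ ≤ ‖z‖ ^ 5) : ‖x ^ 2 - z ^ 2 * v‖ ≤ ‖z‖ ^ 6 := by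
  have hyz : ‖y‖ ≤ ‖z‖ := by
    rw [← pow_le_pow_iff_left₀ (norm_nonneg _) (norm_nonneg _) two_ne_zero, ← norm_pow, hy,
      mul_comm, ← norm_pow]
    exact norm_mul_le_of_le_one huv.1 le_rfl
  have hsum : ‖x - y + 2 * y‖ ≤ ‖z‖ :=
    norm_add_le_of_le_of_le (hxy.trans (pow_le_of_le_one (norm_nonneg z) hz (by norm_num)))
      (norm_mul_le_of_le_one norm_two_le_one hyz)
  rw [show x ^ 2 - z ^ 2 * v = (x - y) * (x - y + 2 * y) + z ^ 2 * (u - v) by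
    linear_combination hy]
  refine norm_add_le_of_le_of_le ?_ ?_
  · rw [norm_mul, pow_succ]
    gcongr
  · rw [norm_mul, norm_pow, show ‖z‖ ^ 6 = ‖z‖ ^ 2 * (‖z‖ ^ 2) ^ 2 by ring]
    gcongr
    exact huv.2.2

lemma norm_triangle_sum_sub_sq_le {n N : ℕ} (hN : 2 * N < n) (hρ : 0 ≤ ρ) {w : ℕ → K}
    (h : ∀ k < n, ‖w k‖ ≤ 1) (h' : ∀ k < n, N < k → ‖w k‖ ≤ ρ) :
    ‖∑ i ∈ range n, ∑ j ∈ range (n - i), w i * w j - (∑ k ∈ range (N + 1), w k) ^ 2‖ ≤ ρ := by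
  rw [sq, sum_mul_sum, sum_sigma', sum_sigma', ← sum_sdiff_eq_sub]
  · refine IsUltrametricDist.norm_sum_le_of_forall_le_of_nonneg hρ fun ⟨i, j⟩ hij => ?_
    simp only [mem_sdiff, mem_sigma, mem_range] at hij
    obtain hi | hj : N < i ∨ N < j := by omega
    · rw [mul_comm]
      exact norm_mul_le_of_le_one (h j (by omega)) (h' i (by omega) hi)
    · exact norm_mul_le_of_le_one (h i (by omega)) (h' j (by omega) hj)
  · intro ⟨i, j⟩ hij
    simp only [mem_sigma, mem_range] at hij ⊢
    omega

lemma IntCongr.mul_quadratic_factors (hρ : 0 ≤ ρ) (hρ₁ : ρ ≤ 1) (hu : ‖u‖ ≤ ρ) (hv : ‖v‖ ≤ ρ) :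
    IntCongr (ρ ^ 2) ((1 - u) ^ 2 * ((1 + v) * (1 - 3 * v + v ^ 2)))
      (1 + (-2 * u + -2 * v)) := by
  have hσ : ρ ^ 2 ≤ 1 := pow_le_one₀ hρ hρ₁
  have h2 : ‖(-2 : K)‖ ≤ 1 := by simpa using norm_two_le_one (K := K)
  have hu' : ‖-2 * u‖ ≤ ρ := norm_mul_le_of_le_one h2 hu
  have hv' : ‖-2 * v‖ ≤ ρ := norm_mul_le_of_le_one h2 hv
  have one_add_le {w : K} (hw : ‖w‖ ≤ ρ) : ‖1 + w‖ ≤ 1 :=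
    norm_add_le_of_le_of_le norm_one.le (hw.trans hρ₁)
  refine mul_one_add hρ hρ₁ (of_norm_le hσ (one_add_le hu') ?_)
    (of_norm_le hσ (one_add_le hv') ?_) hu' hv'
  · rw [show (1 - u) ^ 2 - (1 + -2 * u) = u ^ 2 by ring, norm_pow]
    gcongr
  · rw [show (1 + v) * (1 - 3 * v + v ^ 2) - (1 + -2 * v) = (-2 + v) * v ^ 2 by ring]
    refine norm_mul_le_of_le_one (norm_add_le_of_le_of_le h2 (hv.trans hρ₁)) ?_
    rw [norm_pow]
    gcongr

lemma intCongr_deformationFactor (ht : ‖t‖ < 1) (hz : ‖z‖ = 1) (hD : ‖D‖ = 1) :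
    IntCongr ((‖t‖ ^ 2) ^ 2) (deformationFactor t z D)
      (D ^ 3 / z ^ 6 * (1 + t ^ 2 * (-2 * (1 / z ^ 2 + 1 / D)))) := by
  have hz₀ : z ≠ 0 := norm_ne_zero_iff.mp (by simp [hz])
  have hD₀ : D ≠ 0 := norm_ne_zero_iff.mp (by simp [hD])
  have ht₅ : ‖t ^ 5 / z ^ 5‖ ≤ (‖t‖ ^ 2) ^ 2 := by
    rw [norm_div, norm_pow, norm_pow, hz, one_pow, div_one, ← pow_mul]
    exact pow_le_pow_of_le_one (norm_nonneg t) ht.le (by norm_num)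
  have hρ₁ : ‖t‖ ^ 2 < 1 := pow_lt_one₀ (norm_nonneg t) ht two_ne_zero
  generalize hρ : ‖t‖ ^ 2 = ρ at ht₅ hρ₁ ⊢
  have hρ₀ : 0 ≤ ρ := hρ ▸ by positivity
  have hσ : ρ ^ 2 < 1 := pow_lt_one₀ hρ₀ hρ₁ two_ne_zero
  have hnum := IntCongr.mul_quadratic_factors (u := t ^ 2 / z ^ 2) (v := t ^ 2 / D) hρ₀ hρ₁.le
    (by simp [hz, hρ]) (by simp [hD, hρ])
  have hden : IntCongr (ρ ^ 2) (1 + t ^ 5 / z ^ 5) 1 :=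
    IntCongr.of_norm_le hσ.le norm_one.le (by simpa using ht₅)
  convert (IntCongr.refl (pow_nonneg hρ₀ 2) (x := D ^ 3 / z ^ 6) (by simp [hz, hD])).mul
    (hnum.div hσ (hden.mul hden) (by simp)) using 1
  · rw [deformationFactor]
    field_simp
  · ring

end Congruence

section MirrorSums

variable {K : Type*} [Field K] [CharZero K] {t : K} {N : ℕ}

lemma sum_inv_sq_add_inv_mirrorPair (ht : t = N + 1 / 3) :
    2 * ∑ i ∈ range N, (1 / (2 / 3 + i) ^ 2 + 1 / mirrorPair t i)
      = t ^ 2 * ∑ i ∈ range N, 1 / mirrorPair t i ^ 2 := by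
  have mirror {i : ℕ} (hi : i ∈ range N) : (2 / 3 + (N - 1 - i : ℕ) : K) = t - (2 / 3 + i) := by
    rw [natCast_sub_one_sub hi, ht]
    ring
  have hne (i : ℕ) : (2 / 3 + i : K) ≠ 0 := by
    convert Rat.cast_ne_zero (α := K).mpr (by positivity : (2 / 3 + i : ℚ) ≠ 0) using 1
    push_cast
    rfl
  calc 2 * ∑ i ∈ range N, (1 / (2 / 3 + i) ^ 2 + 1 / mirrorPair t i)
      = ∑ i ∈ range N, 1 / (2 / 3 + i : K) ^ 2 + ∑ i ∈ range N, 1 / (t - (2 / 3 + i)) ^ 2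
        + 2 * ∑ i ∈ range N, 1 / mirrorPair t i := by
        have reflect := sum_range_reflect (fun i : ℕ => 1 / (2 / 3 + i : K) ^ 2) N
        rw [sum_congr rfl fun i hi => by rw [mirror hi]] at reflect
        rw [reflect, sum_add_distrib]
        ring
    _ = t ^ 2 * ∑ i ∈ range N, 1 / mirrorPair t i ^ 2 := by
        simp only [mul_sum, ← sum_add_distrib, mirrorPair]
        refine sum_congr rfl fun i hi => ?_
        have hx := hne i
        have hy : t - (2 / 3 + i) ≠ 0 := mirror hi ▸ hne _
        generalize (2 / 3 + i : K) = x at hx hy ⊢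
        field_simp
        ring

lemma one_add_sum_sub_one_add_sum (ht : t = N + 1 / 3) :
    1 + 2 * t ^ 2 * ∑ i ∈ range N, (1 / (2 / 3 + i : K) ^ 2 - 1 / (1 + i : K) ^ 2)
        - (1 + ∑ i ∈ range N, t ^ 2 * (-2 * (1 / (1 + i : K) ^ 2 + 1 / mirrorPair t i)))
      = (∑ i ∈ range N, 1 / mirrorPair t i ^ 2) * (t ^ 2) ^ 2 := by
  have h := sum_inv_sq_add_inv_mirrorPair ht
  simp only [← mul_sum, sum_add_distrib, sum_sub_distrib] at h ⊢
  linear_combination t ^ 2 * h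

lemma prod_mirrorPair_cube_div (ht : t = N + 1 / 3) :
    ∏ i ∈ range N, mirrorPair t i ^ 3 / (1 + i) ^ 6
      = (∏ i ∈ range N, (2 / 3 + i : K)) ^ 6 / (∏ i ∈ range N, (1 + i : K)) ^ 6 := by
  have h := sq_prod_two_thirds_add ht 0
  simp only [add_zero, mul_zero, zero_pow two_ne_zero] at h
  rw [prod_div_distrib, prod_pow, prod_pow, ← h, ← pow_mul]

lemma sum_inv_sq_three_mul (N : ℕ) :
    ∑ i ∈ range N, (1 / (3 * (1 + i : K) - 1) ^ 2 - 1 / (3 * (1 + i : K)) ^ 2)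
      = 1 / 9 * ∑ i ∈ range N, (1 / (2 / 3 + i : K) ^ 2 - 1 / (1 + i : K) ^ 2) := by
  rw [mul_sum]
  refine sum_congr rfl fun i _ => ?_
  rw [show 3 * (1 + i : K) - 1 = 3 * (2 / 3 + i) by ring]
  simp only [mul_pow, one_div, mul_inv]
  ring

end MirrorSums

lemma intCongr_prod_deformationFactor {K : Type*} [NormedField K] [CharZero K]
    [IsUltrametricDist K] {t : K} {N : ℕ} (ht : t = N + 1 / 3) (ht₁ : ‖t‖ < 1)
    (hz : ∀ i < N, ‖(1 + i : K)‖ = 1) (hx : ∀ i < N, ‖(2 / 3 + i : K)‖ = 1) :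
    IntCongr ((‖t‖ ^ 2) ^ 2)
      (∏ i ∈ range N, deformationFactor t (1 + i) (mirrorPair t i))
      ((∏ i ∈ range N, (2 / 3 + i : K)) ^ 6 / (∏ i ∈ range N, (1 + i : K)) ^ 6
        * (1 + 2 * t ^ 2 * ∑ i ∈ range N, (1 / (2 / 3 + i : K) ^ 2 - 1 / (1 + i : K) ^ 2))) := by
  have hρ₁ : ‖t‖ ^ 2 ≤ 1 := pow_le_one₀ (norm_nonneg t) ht₁.le
  have hσ : (‖t‖ ^ 2) ^ 2 ≤ 1 := pow_le_one₀ (by positivity) hρ₁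
  replace hz : ∀ i ∈ range N, ‖(1 + i : K)‖ = 1 := fun i hi => hz i (mem_range.mp hi)
  have hD : ∀ i ∈ range N, ‖mirrorPair t i‖ = 1 := fun i hi => by
    have hx := hx i (mem_range.mp hi)
    rw [mirrorPair, norm_mul, hx, one_mul, norm_sub_rev, sub_eq_add_neg]
    exact norm_add_eq_one hx (by simpa using ht₁)
  have hcorr : ∀ i ∈ range N,
      ‖t ^ 2 * (-2 * (1 / (1 + i : K) ^ 2 + 1 / mirrorPair t i))‖ ≤ ‖t‖ ^ 2 := fun i hi => by
    rw [mul_comm]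
    refine norm_mul_le_of_le_one (norm_mul_le_of_le_one ?_ (norm_add_le_of_le_of_le ?_ ?_)) ?_
    · simpa using norm_two_le_one (K := K)
    · simp [hz i hi]
    · simp [hD i hi]
    · simp
  have hlin := IntCongr.prod_one_add (by positivity) hρ₁ hcorr
  refine (IntCongr.prod (by positivity) fun i hi =>
    intCongr_deformationFactor ht₁ (hz i hi) (hD i hi)).trans ?_
  rw [prod_mul_distrib, ← prod_mirrorPair_cube_div ht]
  refine (IntCongr.refl (by positivity) (norm_prod_le_one fun i hi => ?_)).mul
    (hlin.trans (IntCongr.of_norm_le hσ hlin.2.1 ?_).symm)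
  · simp [hz i hi, hD i hi]
  rw [one_add_sum_sub_one_add_sum ht]
  refine norm_mul_le_of_le_one (IsUltrametricDist.norm_sum_le_of_forall_le_of_nonneg zero_le_one
    fun i hi => ?_) (by simp)
  simp [hD i hi]

section Padic

variable {p N : ℕ} [Fact p.Prime]

lemma pow_dvd_num_of_norm_le {q : ℚ} {n : ℕ} (h : ‖(q : ℚ_[p])‖ ≤ ‖(p : ℚ_[p])‖ ^ n) :
    (p : ℤ) ^ n ∣ q.num := by
  rw [← Padic.norm_int_le_pow_iff_dvd]
  have hq : (q.num : ℚ_[p]) = q.den * q := by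
    exact_mod_cast congrArg (Rat.cast : ℚ → ℚ_[p]) (Rat.den_mul_eq_num q).symm
  rw [hq, zpow_neg, zpow_natCast, ← inv_pow, ← Padic.norm_p]
  exact norm_mul_le_of_le_one (IsUltrametricDist.norm_natCast_le_one _ _) h

lemma norm_natCast_eq_one_of_lt {m : ℕ} (hm : m ≠ 0) (hmp : m < p) : ‖(m : ℚ_[p])‖ = 1 :=
  (Padic.norm_natCast_eq_one_iff).mpr
    (Nat.coprime_of_lt_prime hm hmp Fact.out)

lemma norm_one_add_natCast {i : ℕ} (hi : i + 1 < p) : ‖(1 + i : ℚ_[p])‖ = 1 := by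
  simpa [add_comm] using norm_natCast_eq_one_of_lt i.succ_ne_zero hi

lemma norm_six_mul_add_one_le_one (k : ℕ) : ‖(6 * k + 1 : ℚ_[p])‖ ≤ 1 := by
  exact_mod_cast IsUltrametricDist.norm_natCast_le_one ℚ_[p] (6 * k + 1)

lemma norm_three_eq_one (hp : p = 3 * N + 1) : ‖(3 : ℚ_[p])‖ = 1 := by
  have hp₂ : 2 ≤ p := Nat.Prime.two_le Fact.out
  simpa using norm_natCast_eq_one_of_lt (p := p) three_ne_zero (by omega)

lemma norm_one_third_add_natCast_le_one (hp : p = 3 * N + 1) (i : ℕ) :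
    ‖(1 / 3 + i : ℚ_[p])‖ ≤ 1 :=
  norm_add_le_of_le_of_le (by simp [norm_three_eq_one hp])
    (IsUltrametricDist.norm_natCast_le_one _ _)

lemma norm_two_thirds_add_natCast (hp : p = 3 * N + 1) {i : ℕ} (hi : i < N) :
    ‖(2 / 3 + i : ℚ_[p])‖ = 1 := by
  have h := norm_natCast_eq_one_of_lt (p := p) (m := 3 * i + 2) (by omega) (by omega)
  rw [show (2 / 3 + i : ℚ_[p]) = (3 * i + 2 : ℕ) / 3 by push_cast; ring, norm_div, h,
    norm_three_eq_one hp, div_one]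

lemma natCast_prime_eq (hp : p = 3 * N + 1) : (p : ℚ_[p]) = 3 * (N + 1 / 3) := by
  have h : (p : ℚ_[p]) = (3 * N + 1 : ℕ) := congrArg Nat.cast hp
  rw [h]
  push_cast
  ring

lemma norm_natCast_add_one_third (hp : p = 3 * N + 1) :
    ‖(N + 1 / 3 : ℚ_[p])‖ = ‖(p : ℚ_[p])‖ := by
  rw [natCast_prime_eq hp, norm_mul, norm_three_eq_one hp, one_mul]

lemma intCongr_deformedTerm (hp : p = 3 * N + 1) {t : ℚ_[p]} (ht : ‖t‖ < 1) {k : ℕ}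
    (hk : k < p) : IntCongr (‖t‖ ^ 5) (deformedTerm t k) (deformedTerm 0 k) := by
  have hσ : ‖t‖ ^ 5 < 1 := pow_lt_one₀ (norm_nonneg t) ht (by norm_num)
  refine (IntCongr.refl (by positivity) (norm_six_mul_add_one_le_one k)).mul
    (IntCongr.prod (by positivity) fun i hi => ?_)
  have hx := norm_one_third_add_natCast_le_one hp i
  have hz : ‖(1 + i : ℚ_[p])‖ = 1 :=
    norm_one_add_natCast (by have := mem_range.mp hi; omega)
  refine IntCongr.div hσ ((IntCongr.refl (by positivity) hx).mul (IntCongr.of_norm_le hσ.le ?_ ?_))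
    ((IntCongr.refl (by positivity) hz.le).mul (IntCongr.of_norm_le hσ.le ?_ ?_)) ?_
  · simpa using pow_le_one₀ (norm_nonneg _) hx
  · simp
  · simp [hz]
  · simp
  · simp [hz]

lemma norm_deformedTerm_zero_le_pow (hp : p = 3 * N + 1) {k : ℕ} (hk : k < p) (hNk : N < k) :
    ‖deformedTerm (0 : ℚ_[p]) k‖ ≤ ‖(p : ℚ_[p])‖ ^ 6 := by
  have hz {i : ℕ} (hi : i ∈ range k) : ‖(1 + i : ℚ_[p])‖ = 1 :=
    norm_one_add_natCast (by have := mem_range.mp hi; omega)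
  rw [deformedTerm_zero]
  refine norm_mul_le_of_le_one (norm_six_mul_add_one_le_one k) ?_
  rw [norm_pow]
  gcongr
  refine norm_prod_le_of_mem (mem_range.mpr hNk) ?_ fun i hi => ?_
  · rw [norm_div, hz (mem_range.mpr hNk), div_one, add_comm, norm_natCast_add_one_third hp]
  · rw [norm_div, hz hi, div_one]
    exact norm_one_third_add_natCast_le_one hp i

theorem norm_sq_sum_deformedTerm_zero_sub_le (hp : p = 3 * N + 1) :
    ‖(∑ k ∈ range (N + 1), deformedTerm (0 : ℚ_[p]) k) ^ 2
      - (∏ i ∈ range N, (2 / 3 + i : ℚ_[p])) ^ 6 / (∏ i ∈ range N, (1 + i : ℚ_[p])) ^ 6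
        * ((p : ℚ_[p]) ^ 2 + 2 * (p : ℚ_[p]) ^ 4
          * ∑ i ∈ range N, (1 / (3 * (1 + i : ℚ_[p]) - 1) ^ 2 - 1 / (3 * (1 + i : ℚ_[p])) ^ 2))‖
      ≤ ‖(p : ℚ_[p])‖ ^ 6 := by
  obtain ⟨t, ht⟩ : ∃ t : ℚ_[p], t = N + 1 / 3 := ⟨_, rfl⟩
  have hpt : (p : ℚ_[p]) = 3 * t := ht ▸ natCast_prime_eq hp
  have htp : ‖t‖ = ‖(p : ℚ_[p])‖ := ht ▸ norm_natCast_add_one_third hp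
  have ht₁ : ‖t‖ < 1 := htp ▸ Padic.norm_p_lt_one
  have hprod := intCongr_prod_deformationFactor ht ht₁
    (fun i _ => norm_one_add_natCast (p := p) (by omega))
    (fun i hi => norm_two_thirds_add_natCast hp hi)
  have hsum : ‖∑ k ∈ range (N + 1), deformedTerm 0 k - ∑ k ∈ range (N + 1), deformedTerm t k‖
      ≤ ‖t‖ ^ 5 := by
    rw [norm_sub_rev, ← sum_sub_distrib]
    exact IsUltrametricDist.norm_sum_le_of_forall_le_of_nonneg (by positivity) fun k hk =>
      (intCongr_deformedTerm hp ht₁ (by have := mem_range.mp hk; omega)).2.2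
  rw [htp] at hprod hsum
  refine le_of_eq_of_le (congrArg norm ?_)
    (hprod.norm_sq_sub_le Padic.norm_p_lt_one.le (hpt ▸ sq_sum_deformedTerm ht) hsum)
  rw [sum_inv_sq_three_mul, hpt]
  ring

theorem norm_triangle_sum_deformedTerm_zero_sub_le (hp : p = 3 * N + 1) :
    ‖∑ i ∈ range p, ∑ j ∈ range (p - i),
        deformedTerm (0 : ℚ_[p]) i * deformedTerm (0 : ℚ_[p]) j
      - (∏ i ∈ range N, (2 / 3 + i : ℚ_[p])) ^ 6 / (∏ i ∈ range N, (1 + i : ℚ_[p])) ^ 6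
        * ((p : ℚ_[p]) ^ 2 + 2 * (p : ℚ_[p]) ^ 4
          * ∑ i ∈ range N, (1 / (3 * (1 + i : ℚ_[p]) - 1) ^ 2 - 1 / (3 * (1 + i : ℚ_[p])) ^ 2))‖
      ≤ ‖(p : ℚ_[p])‖ ^ 6 := by
  rw [← sub_add_sub_cancel]
  refine norm_add_le_of_le_of_le (norm_triangle_sum_sub_sq_le (N := N) (by omega) (by positivity)
    (fun k hk => ?_) fun k => norm_deformedTerm_zero_le_pow hp)
    (norm_sq_sum_deformedTerm_zero_sub_le hp)
  exact (intCongr_deformedTerm hp (t := 0) (by simp) hk).1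

end Padic

/-- Corollary 1.2: for a prime `p ≡ 1 (mod 6)`,
`∑_{i+j≤p-1} (6i+1)(6j+1) (1/3)_i⁶(1/3)_j⁶/((1)_i⁶(1)_j⁶)
  ≡ ((2/3)_{(p-1)/3}⁶/(1)_{(p-1)/3}⁶)·{p² + 2p⁴ ∑_{r=1}^{(p-1)/3}(1/(3r-1)² - 1/(3r)²)}
(mod p⁶)`, i.e. `p⁶` divides the numerator of the difference. -/
theorem stmt_9 (p : ℕ) (hp : p.Prime) (h6 : p % 6 = 1) :
    (p : ℤ) ^ 6 ∣
      ((∑ i ∈ Finset.range p, ∑ j ∈ Finset.range (p - i),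
          ((6 * (i : ℚ) + 1) * (6 * (j : ℚ) + 1))
            * (rf (1/3) i ^ 6 * rf (1/3) j ^ 6) / (rf 1 i ^ 6 * rf 1 j ^ 6))
        - rf (2/3) ((p - 1) / 3) ^ 6 / rf 1 ((p - 1) / 3) ^ 6
          * ((p : ℚ) ^ 2 + 2 * (p : ℚ) ^ 4
            * ∑ r ∈ Finset.Icc 1 ((p - 1) / 3),
                ((1 : ℚ) / (3 * (r : ℚ) - 1) ^ 2 - 1 / (3 * (r : ℚ)) ^ 2))).num := by
  have := Fact.mk hp
  obtain ⟨N, hN⟩ : ∃ N, p = 3 * N + 1 := ⟨(p - 1) / 3, by omega⟩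
  rw [show (p - 1) / 3 = N by omega, ← Finset.Ico_add_one_right_eq_Icc,
    Finset.sum_Ico_eq_sum_range]
  refine pow_dvd_num_of_norm_le ?_
  convert norm_triangle_sum_deformedTerm_zero_sub_le hN using 2
  simp only [rf, deformedTerm_zero, prod_div_distrib, div_pow]
  push_cast
  congr! 3 with i _ j _
  ring
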